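/- Let G be the quotient of Sp_4(3) = Matrix.symplecticGroup (Fin 2) (ZMod 3) by its center (so G ≅ PSp_4(3) ≅ U_4(2)). Then Γ(G) = Γ(S_5), where S_5 = Equiv.Perm (Fin 5). Explicitly: a prime divides |G| iff it divides 5!, and for all distinct primes r, s, G has an element of order r·s iff S_5 has an element of order r·s. -/

import Mathlib

open Matrix Polynomial

/-- The characteristic polynomial of a symplectic matrix is palindromic. -/
theorem SymplecticGroup.reverse_charpoly_eq {l R : Type*} [DecidableEq l] [Fintype l]
    [CommRing R] {A : Matrix (l ⊕ l) (l ⊕ l) R} (hA : A ∈ symplecticGroup l R) :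
    A.charpoly.reverse = A.charpoly := by
  have hdet := SymplecticGroup.det_eq_one hA
  have hunit : IsUnit A := (isUnit_iff_isUnit_det A).2 (hdet ▸ isUnit_one)
  have hinv : A⁻¹.charpoly = A.charpoly := by
    rw [SymplecticGroup.inv_eq_symplectic_inv A hA, Matrix.mul_assoc, charpoly_mul_comm,
      Matrix.mul_assoc, Matrix.mul_neg, J_squared, neg_neg, Matrix.mul_one, charpoly_transpose]
  rw [charpoly_inv A hunit, hdet] at hinv
  simpa [← two_mul, pow_mul, reverse_charpoly] using hinv

/-- A monic palindromic quartic is determined by its middle coefficients. -/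
theorem Polynomial.eq_of_reverse_eq_of_natDegree_eq_four {R : Type*} [CommRing R] {p : R[X]}
    (hmonic : p.Monic) (hdeg : p.natDegree = 4) (hrev : p.reverse = p) :
    p = X ^ 4 + C (p.coeff 3) * X ^ 3 + C (p.coeff 2) * X ^ 2 + C (p.coeff 3) * X + 1 := by
  have h4 : p.coeff 4 = 1 := hdeg ▸ hmonic.coeff_natDegree
  have hcoeff (n : ℕ) : p.coeff (revAt 4 n) = p.coeff n := by
    rw [← hdeg, ← coeff_reverse, hrev]
  have h0 : p.coeff 0 = 1 := by rw [← hcoeff, ← h4]; rfl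
  have h1 : p.coeff 1 = p.coeff 3 := by rw [← hcoeff]; rfl
  conv_lhs => rw [p.as_sum_range' 5 (by omega)]
  simp only [Finset.sum_range_succ, Finset.sum_range_zero, h0, h1, h4, ← C_mul_X_pow_eq_monomial]
  simp only [map_one]
  ring

/-- In characteristic `3`, every palindromic quartic with coefficients in the prime field divides
`x ^ 72 - 1`, `x ^ 5 - 1` or `x ^ 5 + 1`. -/
theorem palindromic_quartic_dvd {R : Type*} [CommRing R] [Algebra (ZMod 3) R] (a b : ZMod 3)
    (x : R) :
    let p := x ^ 4 + algebraMap _ R a * x ^ 3 + algebraMap _ R b * x ^ 2 + algebraMap _ R a * x + 1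
    p ∣ x ^ 72 - 1 ∨ p ∣ x ^ 5 - 1 ∨ p ∣ x ^ 5 + 1 := by
  intro p
  have h3 : (3 : R) = 0 := by
    rw [← map_ofNat (algebraMap (ZMod 3) R) 3, show (OfNat.ofNat 3 : ZMod 3) = 0 from rfl, map_zero]
  have hpow {n : ℕ} (hn : n ∣ 72) (h : p ∣ x ^ n - 1) : p ∣ x ^ 72 - 1 := by
    obtain ⟨m, hm⟩ := hn
    rw [hm, pow_mul]
    exact h.trans (sub_one_dvd_pow_sub_one _ _)
  have hcases (c : ZMod 3) : c = 0 ∨ c = 1 ∨ c = -1 := by decide +revert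
  rcases hcases a with rfl | rfl | rfl <;> rcases hcases b with rfl | rfl | rfl <;>
    simp only [p, map_zero, map_one, map_neg] at hpow ⊢
  · exact .inl (hpow (n := 8) (by norm_num) ⟨x ^ 4 - 1, by ring⟩)
  · exact .inl (hpow (n := 6) (by norm_num) ⟨x ^ 2 - 1, by ring⟩)
  · exact .inl (hpow (n := 12) (by norm_num) ⟨x ^ 8 + x ^ 6 - x ^ 2 - 1, by ring⟩)
  · refine .inl (hpow (n := 18) (by norm_num) ⟨(x + 1) ^ 2 * (x ^ 3 + 1) * (x ^ 9 - 1), ?_⟩)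
    linear_combination
      -(x ^ 3 * (x ^ 3 + 1) + x * (x + 1) * (x ^ 3 + 1) ^ 2) * (x ^ 9 - 1) * h3
  · exact .inr (.inl ⟨x - 1, by ring⟩)
  · refine .inl (hpow (n := 12) (by norm_num)
      ⟨x ^ 8 - x ^ 7 - x ^ 6 - x ^ 5 + x ^ 3 + x ^ 2 + x - 1, ?_⟩)
    linear_combination (x ^ 10 - x ^ 2) * h3
  · refine .inl (hpow (n := 9) (by norm_num) ⟨x ^ 5 + x ^ 4 + x ^ 3 - x ^ 2 - x - 1, ?_⟩)
    linear_combination (x ^ 6 - x ^ 3) * h3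
  · exact .inr (.inr ⟨x + 1, by ring⟩)
  · refine .inl (hpow (n := 12) (by norm_num)
      ⟨x ^ 8 + x ^ 7 - x ^ 6 + x ^ 5 - x ^ 3 + x ^ 2 - x - 1, ?_⟩)
    linear_combination (x ^ 10 - x ^ 2) * h3

/-- Every `4 × 4` symplectic matrix `A` over `𝔽₃` satisfies `A ^ 72 = 1` or `A ^ 5 = ± 1`. -/
theorem pow_eq_of_mem_symplecticGroup {A : Matrix (Fin 2 ⊕ Fin 2) (Fin 2 ⊕ Fin 2) (ZMod 3)}
    (hA : A ∈ symplecticGroup (Fin 2) (ZMod 3)) : A ^ 72 = 1 ∨ A ^ 5 = 1 ∨ A ^ 5 = -1 := by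
  have hp := eq_of_reverse_eq_of_natDegree_eq_four (charpoly_monic A)
    (by simp [charpoly_natDegree_eq_dim]) (SymplecticGroup.reverse_charpoly_eq hA)
  have hdvd := palindromic_quartic_dvd (A.charpoly.coeff 3) (A.charpoly.coeff 2)
    (X : (ZMod 3)[X])
  simp only [algebraMap_eq, ← hp] at hdvd
  have haeval {q : (ZMod 3)[X]} (h : A.charpoly ∣ q) : aeval A q = 0 :=
    aeval_eq_zero_of_dvd_aeval_eq_zero h (aeval_self_charpoly A)
  rcases hdvd with h | h | h
  · exact .inl (sub_eq_zero.1 (by simpa using haeval h))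
  · exact .inr (.inl (sub_eq_zero.1 (by simpa using haeval h)))
  · exact .inr (.inr (eq_neg_of_add_eq_zero_left (by simpa using haeval h)))

/-- Every element of `PSp₄(3)` has order dividing `72` or `5`. -/
theorem pow_eq_one_of_PSp4_3
    (x : symplecticGroup (Fin 2) (ZMod 3) ⧸ Subgroup.center (symplecticGroup (Fin 2) (ZMod 3))) :
    x ^ 72 = 1 ∨ x ^ 5 = 1 := by
  obtain ⟨A, rfl⟩ := QuotientGroup.mk_surjective x
  simp only [← QuotientGroup.mk_pow, QuotientGroup.eq_one_iff]
  rcases pow_eq_of_mem_symplecticGroup A.2 with h | h | h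
  · exact .inl ((show A ^ 72 = 1 from Subtype.ext h) ▸ one_mem _)
  · exact .inr ((show A ^ 5 = 1 from Subtype.ext h) ▸ one_mem _)
  · refine .inr (Subgroup.mem_center_iff.2 fun B => Subtype.ext ?_)
    simp [h]

/-- In a group whose elements all satisfy `x ^ 72 = 1` or `x ^ 5 = 1`, the only possible order
that is a product of two distinct primes is `6`. -/
theorem mul_eq_six_of_orderOf_eq {G : Type*} [Group G] (hG : ∀ x : G, x ^ 72 = 1 ∨ x ^ 5 = 1)
    {r s : ℕ} (hr : r.Prime) (hs : s.Prime) (hrs : r ≠ s) {x : G} (hx : orderOf x = r * s) :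
    r * s = 6 := by
  have h72 {p : ℕ} (hp : p.Prime) (h : p ∣ 72) : p = 2 ∨ p = 3 := by
    rw [show 72 = 2 ^ 3 * 3 ^ 2 by norm_num, hp.dvd_mul] at h
    exact h.imp (fun h => (Nat.prime_dvd_prime_iff_eq hp Nat.prime_two).1 (hp.dvd_of_dvd_pow h))
      fun h => (Nat.prime_dvd_prime_iff_eq hp Nat.prime_three).1 (hp.dvd_of_dvd_pow h)
  rcases hG x with h | h <;> rw [← orderOf_dvd_iff_pow_eq_one, hx] at h
  · rcases h72 hr (dvd_of_mul_right_dvd h) with rfl | rfl <;>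
      rcases h72 hs (dvd_of_mul_left_dvd h) with rfl | rfl <;> simp_all
  · have hr5 := (Nat.prime_dvd_prime_iff_eq hr Nat.prime_five).1 (dvd_of_mul_right_dvd h)
    have hs5 := (Nat.prime_dvd_prime_iff_eq hs Nat.prime_five).1 (dvd_of_mul_left_dvd h)
    exact absurd (hr5.trans hs5.symm) hrs

theorem perm_five_pow_eq_one (y : Equiv.Perm (Fin 5)) : y ^ 72 = 1 ∨ y ^ 5 = 1 := by
  have h : ∀ y : Equiv.Perm (Fin 5), y ^ 12 = 1 ∨ y ^ 5 = 1 := by decide +kernel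
  exact (h y).imp_left fun hy => by rw [show 72 = 12 * 6 by norm_num, pow_mul, hy, one_pow]

theorem exists_perm_five_orderOf_eq_six : ∃ y : Equiv.Perm (Fin 5), orderOf y = 6 := by
  refine ⟨c[0, 1, 2] * c[3, 4], ?_⟩
  refine orderOf_eq_of_pow_and_pow_div_prime (by norm_num) (by decide +kernel) fun p hp hdvd => ?_
  rw [show 6 = 2 * 3 by norm_num, hp.dvd_mul, Nat.prime_dvd_prime_iff_eq hp Nat.prime_two,
    Nat.prime_dvd_prime_iff_eq hp Nat.prime_three] at hdvd
  rcases hdvd with rfl | rfl <;> decide +kernel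

theorem exists_PSp4_3_orderOf_eq_five :
    ∃ x : symplecticGroup (Fin 2) (ZMod 3) ⧸ Subgroup.center (symplecticGroup (Fin 2) (ZMod 3)),
      orderOf x = 5 := by
  let A : symplecticGroup (Fin 2) (ZMod 3) :=
    ⟨fromBlocks !![0, 0; 1, 0] !![0, -1; 0, 0] !![1, 1; 1, 0] !![0, 0; 1, -1],
      SymplecticGroup.mem_iff.2 (by decide +kernel)⟩
  have hA : A ^ 5 = 1 := Subtype.ext (by decide +kernel)
  have : Fact (Nat.Prime 5) := ⟨Nat.prime_five⟩
  refine ⟨A, orderOf_eq_prime (by rw [← QuotientGroup.mk_pow, hA]; rfl) fun h => ?_⟩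
  rw [QuotientGroup.eq_one_iff, Subgroup.mem_center_iff] at h
  have hJ : J (Fin 2) (ZMod 3) * A = A * J (Fin 2) (ZMod 3) :=
    congrArg Subtype.val (h (SymplecticGroup.symJ _ _))
  revert hJ
  decide +kernel

theorem exists_PSp4_3_orderOf_eq_six :
    ∃ x : symplecticGroup (Fin 2) (ZMod 3) ⧸ Subgroup.center (symplecticGroup (Fin 2) (ZMod 3)),
      orderOf x = 6 := by
  let A : symplecticGroup (Fin 2) (ZMod 3) :=
    ⟨fromBlocks !![1, 0; 0, -1] !![1, 0; 0, 0] 0 !![1, 0; 0, -1],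
      SymplecticGroup.mem_iff.2 (by decide +kernel)⟩
  let S : symplecticGroup (Fin 2) (ZMod 3) :=
    ⟨fromBlocks !![0, 1; 1, 0] 0 0 !![0, 1; 1, 0], SymplecticGroup.mem_iff.2 (by decide +kernel)⟩
  have hA : A ^ 6 = 1 := Subtype.ext (by decide +kernel)
  have hne {n : ℕ} (h : S.1 * A.1 ^ n ≠ A.1 ^ n * S.1) :
      (A : _ ⧸ Subgroup.center (symplecticGroup (Fin 2) (ZMod 3))) ^ n ≠ 1 := by
    rw [← QuotientGroup.mk_pow, Ne, QuotientGroup.eq_one_iff, Subgroup.mem_center_iff]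
    exact fun hc => h (congrArg Subtype.val (hc S))
  refine ⟨A, orderOf_eq_of_pow_and_pow_div_prime (by norm_num)
    (by rw [← QuotientGroup.mk_pow, hA]; rfl) fun p hp hdvd => ?_⟩
  rw [show 6 = 2 * 3 by norm_num, hp.dvd_mul, Nat.prime_dvd_prime_iff_eq hp Nat.prime_two,
    Nat.prime_dvd_prime_iff_eq hp Nat.prime_three] at hdvd
  rcases hdvd with rfl | rfl <;> exact hne (by decide +kernel)

/-- `Γ(PSp₄(3)) = Γ(S₅)` (the case `(U₄(2), O₄⁻(2))` of Corollary 1.4(b), using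
`U₄(2) ≅ PSp₄(3)` and `O₄⁻(2) ≅ S₅`): the same primes divide `|PSp₄(3)|` and `5!`,
and for all distinct primes `r, s`, `PSp₄(3)` has an element of order `r * s` iff
`S₅` does. -/
theorem prime_graph_PSp4_3_eq_S5 :
    (∀ t : ℕ, t.Prime →
      (t ∣ Nat.card (Matrix.symplecticGroup (Fin 2) (ZMod 3) ⧸
          Subgroup.center (Matrix.symplecticGroup (Fin 2) (ZMod 3))) ↔
        t ∣ Nat.factorial 5)) ∧
    (∀ r s : ℕ, r.Prime → s.Prime → r ≠ s →
      ((∃ x : Matrix.symplecticGroup (Fin 2) (ZMod 3) ⧸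
          Subgroup.center (Matrix.symplecticGroup (Fin 2) (ZMod 3)), orderOf x = r * s) ↔
        (∃ y : Equiv.Perm (Fin 5), orderOf y = r * s))) := by
  refine ⟨fun t ht => ⟨fun h => ?_, fun h => ?_⟩, fun r s hr hs hrs => ⟨?_, ?_⟩⟩
  · have := Fact.mk ht
    obtain ⟨x, hx⟩ := exists_prime_orderOf_dvd_card' t h
    rcases pow_eq_one_of_PSp4_3 x with h | h <;> rw [← orderOf_dvd_iff_pow_eq_one, hx] at h
    · exact ht.dvd_of_dvd_pow (h.trans (by decide : 72 ∣ Nat.factorial 5 ^ 2))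
    · exact h.trans (by decide)
  · obtain ⟨x, hx⟩ := exists_PSp4_3_orderOf_eq_five
    obtain ⟨y, hy⟩ := exists_PSp4_3_orderOf_eq_six
    have hdvd := h.trans (by decide : Nat.factorial 5 ∣ 6 ^ 3 * 5)
    rcases ht.dvd_mul.1 hdvd with h | h
    · exact (ht.dvd_of_dvd_pow h).trans (hy ▸ orderOf_dvd_natCard y)
    · exact h.trans (hx ▸ orderOf_dvd_natCard x)
  · rintro ⟨x, hx⟩
    rw [mul_eq_six_of_orderOf_eq pow_eq_one_of_PSp4_3 hr hs hrs hx]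
    exact exists_perm_five_orderOf_eq_six
  · rintro ⟨y, hy⟩
    rw [mul_eq_six_of_orderOf_eq perm_five_pow_eq_one hr hs hrs hy]
    exact exists_PSp4_3_orderOf_eq_six
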